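/- arXiv:2403.09335 — 4 statements merged into one kernel-verified Lean document; each statement's English description precedes it below -/
import Mathlib

section
/- Let λ > 0 be real and N ≥ 1 an integer. Define real numbers b_l recursively by b_0 = 1 and, for l ≥ 1, b_l := −(1/N)·∫_0^N ( Σ_{j=0}^{l−1} λ^{l−j}·(t^{l−j}/(l−j)!)·b_j − λ^l·Σ_{k=0}^{⌊t⌋} (t−k)^{l−1}/(l−1)! ) dt. Then for every l ≥ 1, b_l = λ^l·(bernoulli' l)/l!. (These are the backward optimal average constants for the path X_t = λt produced by the paper's variance-minimization, and they recover the Bernoulli numbers with B_1 = +1/2.) -/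
open scoped Nat
open MeasureTheory

theorem bernoulliFun_eq_sum (l : ℕ) (t : ℝ) :
    bernoulliFun l t
      = ∑ j ∈ Finset.range (l + 1), (l.choose j : ℝ) * ((bernoulli j : ℚ) : ℝ) * t ^ (l - j) := by
  rw [bernoulliFun, Polynomial.bernoulli, Polynomial.map_sum, Polynomial.eval_finsetSum]
  refine Finset.sum_congr rfl fun j _ => ?_
  simp only [Polynomial.map_monomial, Polynomial.eval_monomial, map_mul, eq_ratCast,
    Rat.cast_natCast]
  ring

theorem bernoulliFun_one_add (l : ℕ) (t : ℝ) :
    bernoulliFun l (1 + t) = bernoulliFun l t + l * t ^ (l - 1) := by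
  have h := congrArg (fun p => (p.map (algebraMap ℚ ℝ)).eval t)
    (Polynomial.bernoulli_comp_one_add_X l)
  simpa [bernoulliFun, Polynomial.map_comp] using h

theorem bernoulliFun_one_add_eq_sum (l : ℕ) (t : ℝ) :
    bernoulliFun l (1 + t)
      = ∑ j ∈ Finset.range (l + 1), (l.choose j : ℝ) * ((bernoulli' j : ℚ) : ℝ) * t ^ (l - j) := by
  have hterm : ∀ j, (l.choose j : ℝ) * ((bernoulli' j : ℚ) : ℝ) * t ^ (l - j)
      = (l.choose j : ℝ) * ((bernoulli j : ℚ) : ℝ) * t ^ (l - j)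
        + if j = 1 then (l : ℝ) * t ^ (l - 1) else 0 := by
    intro j
    split_ifs with hj
    · subst hj
      rw [bernoulli_one, bernoulli'_one, Nat.choose_one_right]
      push_cast
      ring
    · rw [bernoulli_eq_bernoulli'_of_ne_one hj, add_zero]
  rw [bernoulliFun_one_add, bernoulliFun_eq_sum, Finset.sum_congr rfl fun j _ => hterm j,
    Finset.sum_add_distrib, Finset.sum_ite_eq']
  rcases l with _ | l <;> simp

theorem bernoulliFun_one_add_eq_sub_natCast_add_sum (l n : ℕ) (t : ℝ) :
    bernoulliFun l (1 + t)
      = bernoulliFun l (t - n) + l * ∑ k ∈ Finset.range (n + 1), (t - (k : ℝ)) ^ (l - 1) := by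
  induction n with
  | zero => simp [bernoulliFun_one_add]
  | succ n ih =>
    have hshift := bernoulliFun_one_add l (t - (n + 1 : ℕ))
    rw [show 1 + (t - ((n + 1 : ℕ) : ℝ)) = t - n by push_cast; ring] at hshift
    rw [Finset.sum_range_succ, ih, hshift]
    ring

theorem integral_bernoulliFun_sub_natCast {l : ℕ} (hl : l ≠ 0) (n : ℕ) :
    ∫ t in (n : ℝ)..((n + 1 : ℕ) : ℝ), bernoulliFun l (t - n) = 0 := by
  rw [intervalIntegral.integral_comp_sub_right (bernoulliFun l)]
  simpa using integral_bernoulliFun_eq_zero hl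

/-- On `[n, n + 1)` the sawtooth integrand is a shifted Bernoulli polynomial minus its mean. -/
theorem sawtooth_integrand_eq {lam : ℝ} {b : ℕ → ℝ} {l : ℕ} (hl : 1 ≤ l)
    (hb : ∀ j < l, b j = lam ^ j * ((bernoulli' j : ℚ) : ℝ) / (j ! : ℝ)) (n : ℕ) (t : ℝ) :
    (∑ j ∈ Finset.range l, lam ^ (l - j) * (t ^ (l - j) / ((l - j)! : ℝ)) * b j)
        - lam ^ l * ∑ k ∈ Finset.range (n + 1), (t - (k : ℝ)) ^ (l - 1) / ((l - 1)! : ℝ)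
      = lam ^ l / (l ! : ℝ) * (bernoulliFun l (t - n) - ((bernoulli' l : ℚ) : ℝ)) := by
  have hsum : ∑ j ∈ Finset.range l, lam ^ (l - j) * (t ^ (l - j) / ((l - j)! : ℝ)) * b j
      = lam ^ l / (l ! : ℝ) * ∑ j ∈ Finset.range l,
          (l.choose j : ℝ) * ((bernoulli' j : ℚ) : ℝ) * t ^ (l - j) := by
    rw [Finset.mul_sum]
    refine Finset.sum_congr rfl fun j hj => ?_
    have hjl := Finset.mem_range.1 hj
    rw [hb j hjl, Nat.cast_choose ℝ hjl.le, ← pow_sub_mul_pow lam hjl.le]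
    field_simp
  have hfact : (l ! : ℝ) = l * ((l - 1)! : ℝ) := by
    exact_mod_cast (Nat.mul_factorial_pred (by omega)).symm
  have hl0 : (l : ℝ) ≠ 0 := by positivity
  have hpoly := bernoulliFun_one_add_eq_sum l t
  rw [Finset.sum_range_succ, bernoulliFun_one_add_eq_sub_natCast_add_sum l n] at hpoly
  simp only [Nat.choose_self, Nat.cast_one, one_mul, Nat.sub_self, pow_zero, mul_one] at hpoly
  rw [hsum, ← Finset.sum_div, eq_sub_iff_add_eq.2 hpoly.symm, hfact]
  field_simp
  ring

/-- The backward optimal average constants of the path `X_t = λt` recover the Bernoulli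
numbers with `B_1 = +1/2`. -/
theorem backward_optimal_constants_eq_bernoulli' (lam : ℝ) (hlam : 0 < lam)
    (N : ℕ) (hN : 1 ≤ N) (b : ℕ → ℝ) (hb0 : b 0 = 1)
    (hrec : ∀ l, 1 ≤ l → b l =
      -(1 / (N : ℝ)) * ∫ t in (0:ℝ)..(N:ℝ),
        ((∑ j ∈ Finset.range l, lam ^ (l - j) * (t ^ (l - j) / ((l - j)! : ℝ)) * b j)
          - lam ^ l * ∑ k ∈ Finset.range (⌊t⌋.toNat + 1),
              (t - (k : ℝ)) ^ (l - 1) / ((l - 1)! : ℝ))) :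
    ∀ l, 1 ≤ l → b l = lam ^ l * ((bernoulli' l : ℚ) : ℝ) / (l ! : ℝ) := by
  suffices h : ∀ l, b l = lam ^ l * ((bernoulli' l : ℚ) : ℝ) / (l ! : ℝ) from fun l _ => h l
  intro l
  induction l using Nat.strong_induction_on with
  | _ l ih =>
  rcases Nat.eq_zero_or_pos l with rfl | hl
  · simp [hb0]
  rw [hrec l hl]
  set f : ℝ → ℝ := fun t =>
    (∑ j ∈ Finset.range l, lam ^ (l - j) * (t ^ (l - j) / ((l - j)! : ℝ)) * b j)
      - lam ^ l * ∑ k ∈ Finset.range (⌊t⌋.toNat + 1),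
          (t - (k : ℝ)) ^ (l - 1) / ((l - 1)! : ℝ) with hf
  have hEq : ∀ n : ℕ, Set.EqOn
      (fun t => lam ^ l / (l ! : ℝ) * (bernoulliFun l (t - n) - ((bernoulli' l : ℚ) : ℝ))) f
      (Set.uIoo (n : ℝ) ((n + 1 : ℕ) : ℝ)) := by
    intro n t ht
    rw [Set.uIoo_of_le (by simp)] at ht
    have hfloor : ⌊t⌋ = (n : ℤ) :=
      Int.floor_eq_iff.2 ⟨by exact_mod_cast ht.1.le, by exact_mod_cast ht.2⟩
    simp only [hf, hfloor, Int.toNat_natCast]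
    exact (sawtooth_integrand_eq hl ih n t).symm
  have hcont : ∀ n : ℕ, Continuous fun t : ℝ => bernoulliFun l (t - n) := fun n =>
    (continuous_bernoulliFun l).comp (continuous_id.sub continuous_const)
  have hint : ∀ n : ℕ, IntervalIntegrable f volume (n : ℝ) ((n + 1 : ℕ) : ℝ) := fun n =>
    ((continuous_const.mul ((hcont n).sub continuous_const)).intervalIntegrable _ _).congr_uIoo
      (hEq n)
  have hval : ∀ n : ℕ, ∫ t in (n : ℝ)..((n + 1 : ℕ) : ℝ), f t
      = -(lam ^ l * ((bernoulli' l : ℚ) : ℝ) / (l ! : ℝ)) := by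
    intro n
    rw [← intervalIntegral.integral_congr_uIoo (hEq n), intervalIntegral.integral_const_mul,
      intervalIntegral.integral_sub ((hcont n).intervalIntegrable _ _) (by simp),
      integral_bernoulliFun_sub_natCast hl.ne', intervalIntegral.integral_const]
    push_cast
    simp only [smul_eq_mul]
    ring
  have htotal := intervalIntegral.sum_integral_adjacent_intervals
    (a := fun n : ℕ => (n : ℝ)) (n := N) fun n _ => hint n
  simp only [hval, Finset.sum_const, Finset.card_range, nsmul_eq_mul, Nat.cast_zero] at htotal
  rw [← htotal]
  have hN0 : (N : ℝ) ≠ 0 := by positivity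
  field_simp
end

section
/- For every integer l ≥ 1 and every real t ≥ 0: Σ_{j=0}^{l} (t^{l−j}/(l−j)!)·(bernoulli' j)/j! − Σ_{k=0}^{⌊t⌋} (t−k)^{l−1}/(l−1)! = P_l(t − ⌊t⌋)/l!. (This says the backward optimal sawtooth signature of the path X_t = t, with initial constants b_j = (bernoulli' j)/j!, equals the periodized Bernoulli polynomial divided by l!.) -/
open scoped Nat

/-- The `l`-th Bernoulli polynomial `P_l(x) = ∑_{j=0}^l C(l,j) · B_j · x^{l-j}`,
with `bernoulli 1 = -1/2`. -/
noncomputable def bernoulliPoly (l : ℕ) (x : ℝ) : ℝ :=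
  ∑ j ∈ Finset.range (l + 1), (l.choose j : ℝ) * ((bernoulli j : ℚ) : ℝ) * x ^ (l - j)

lemma bernoulliPoly_eq_aeval (l : ℕ) (x : ℝ) :
    bernoulliPoly l x = Polynomial.aeval x (Polynomial.bernoulli l) := by
  simp only [bernoulliPoly, Polynomial.bernoulli_def, map_sum, Polynomial.aeval_monomial]
  rw [← Finset.sum_range_reflect]
  refine Finset.sum_congr rfl fun j hj => ?_
  have hj' : j ≤ l := Nat.lt_succ_iff.mp (Finset.mem_range.mp hj)
  have h₁ : l + 1 - 1 - j = l - j := by omega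
  have h₂ : l - (l - j) = j := by omega
  rw [h₁, h₂, Nat.choose_symm hj']
  simp [mul_comm]

lemma bernoulliPoly_one_add (l : ℕ) (x : ℝ) :
    bernoulliPoly l (1 + x) = bernoulliPoly l x + l * x ^ (l - 1) := by
  have h := congrArg (Polynomial.aeval x) (Polynomial.bernoulli_comp_one_add_X l)
  simpa [bernoulliPoly_eq_aeval, Polynomial.aeval_comp] using h

lemma sum_choose_mul_bernoulli'_mul_pow (l : ℕ) (hl : 1 ≤ l) (x : ℝ) :
    ∑ j ∈ Finset.range (l + 1), (l.choose j : ℝ) * ((bernoulli' j : ℚ) : ℝ) * x ^ (l - j)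
      = bernoulliPoly l (1 + x) := by
  rw [bernoulliPoly_one_add, bernoulliPoly, ← sub_eq_iff_eq_add', ← Finset.sum_sub_distrib,
    Finset.sum_eq_single_of_mem 1 (Finset.mem_range.mpr (by omega))]
  · simp only [bernoulli'_one, bernoulli_one, Nat.choose_one_right]
    push_cast
    ring
  · intro j _ hj
    rw [bernoulli_eq_bernoulli'_of_ne_one hj, sub_self]

lemma bernoulliPoly_one_add_sub_sum (l : ℕ) (x : ℝ) (n : ℕ) :
    bernoulliPoly l (1 + x) - l * ∑ k ∈ Finset.range (n + 1), (x - (k : ℝ)) ^ (l - 1)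
      = bernoulliPoly l (x - n) := by
  induction n with
  | zero => simp [bernoulliPoly_one_add]
  | succ n ih =>
    have h := bernoulliPoly_one_add l (x - ((n + 1 : ℕ) : ℝ))
    rw [show 1 + (x - ((n + 1 : ℕ) : ℝ)) = x - n by push_cast; ring] at h
    rw [Finset.sum_range_succ, mul_add]
    linarith

/-- The backward optimal sawtooth signature of `X_t = t`, with constants
`b_j = bernoulli' j / j!`, equals the periodized Bernoulli polynomial over `l!`. -/
theorem backward_optimal_sawtooth_eq_bernoulliPoly (l : ℕ) (hl : 1 ≤ l)
    (t : ℝ) (ht : 0 ≤ t) :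
    (∑ j ∈ Finset.range (l + 1),
        (t ^ (l - j) / ((l - j)! : ℝ)) * (((bernoulli' j : ℚ) : ℝ) / (j ! : ℝ)))
      - (∑ k ∈ Finset.range (⌊t⌋.toNat + 1), (t - (k : ℝ)) ^ (l - 1) / ((l - 1)! : ℝ))
      = bernoulliPoly l (t - ⌊t⌋) / (l ! : ℝ) := by
  have hfloor : ((⌊t⌋.toNat : ℕ) : ℝ) = (⌊t⌋ : ℝ) := by
    exact_mod_cast Int.toNat_of_nonneg (Int.floor_nonneg.mpr ht)
  have hfact : (l ! : ℝ) = l * ((l - 1)! : ℝ) := by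
    exact_mod_cast (Nat.mul_factorial_pred (by omega)).symm
  have hl0 : (l : ℝ) ≠ 0 := by exact_mod_cast (by omega : l ≠ 0)
  rw [← hfloor, ← bernoulliPoly_one_add_sub_sum, ← sum_choose_mul_bernoulli'_mul_pow l hl,
    sub_div, Finset.sum_div, ← Finset.sum_div (Finset.range (⌊t⌋.toNat + 1))]
  congr 1
  · refine Finset.sum_congr rfl fun j hj => ?_
    rw [Nat.cast_choose ℝ (Nat.lt_succ_iff.mp (Finset.mem_range.mp hj))]
    field_simp
  · rw [hfact, mul_div_mul_left _ _ hl0]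
end

section
/- For every integer l ≥ 1 and every real t ≥ 0: Σ_{j=0}^{l} (t^{l−j}/(l−j)!)·(bernoulli j)/j! − Σ_{k=0}^{⌊t⌋−1} (t−k−1)^{l−1}/(l−1)! = P_l(t − ⌊t⌋)/l!. (This says the forward optimal sawtooth signature of the path X_t = t, with initial constants b_j = (bernoulli j)/j!, equals the periodized Bernoulli polynomial divided by l!.) -/
open scoped Nat

/-- Telescoping the difference equation for the Bernoulli polynomials. -/
lemma bernoulliPoly_sub_natCast (l : ℕ) (t : ℝ) (n : ℕ) :
    bernoulliPoly l (t - n) =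
      bernoulliPoly l t - ∑ k ∈ Finset.range n, l * (t - (k : ℝ) - 1) ^ (l - 1) := by
  induction n with
  | zero => simp
  | succ n ih =>
    have h := bernoulliPoly_one_add l (t - n - 1)
    rw [add_sub_cancel, ih] at h
    rw [Finset.sum_range_succ, Nat.cast_add_one, ← sub_sub]
    linarith

lemma bernoulliPoly_div_factorial (l : ℕ) (t : ℝ) :
    bernoulliPoly l t / (l ! : ℝ) = ∑ j ∈ Finset.range (l + 1),
      (t ^ (l - j) / ((l - j)! : ℝ)) * (((bernoulli j : ℚ) : ℝ) / (j ! : ℝ)) := by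
  rw [bernoulliPoly, Finset.sum_div]
  refine Finset.sum_congr rfl fun j hj => ?_
  rw [Nat.cast_choose ℝ (Nat.lt_succ_iff.mp (Finset.mem_range.mp hj))]
  have := Nat.factorial_ne_zero l
  field_simp

/-- The forward optimal sawtooth signature of `X_t = t`, with constants
`b_j = bernoulli j / j!`, equals the periodized Bernoulli polynomial over `l!`. -/
theorem forward_optimal_sawtooth_eq_bernoulliPoly (l : ℕ) (hl : 1 ≤ l)
    (t : ℝ) (ht : 0 ≤ t) :
    (∑ j ∈ Finset.range (l + 1),
        (t ^ (l - j) / ((l - j)! : ℝ)) * (((bernoulli j : ℚ) : ℝ) / (j ! : ℝ)))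
      - (∑ k ∈ Finset.range ⌊t⌋.toNat, (t - (k : ℝ) - 1) ^ (l - 1) / ((l - 1)! : ℝ))
      = bernoulliPoly l (t - ⌊t⌋) / (l ! : ℝ) := by
  have hfloor : ((⌊t⌋ : ℤ) : ℝ) = (⌊t⌋.toNat : ℝ) := by
    exact_mod_cast (Int.toNat_of_nonneg (Int.floor_nonneg.mpr ht)).symm
  rw [hfloor, bernoulliPoly_sub_natCast, sub_div, bernoulliPoly_div_factorial, Finset.sum_div]
  congr 1
  refine Finset.sum_congr rfl fun k _ => ?_
  obtain ⟨m, rfl⟩ := Nat.exists_eq_add_of_le' hl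
  rw [Nat.factorial_succ, Nat.add_sub_cancel, Nat.cast_mul]
  exact (mul_div_mul_left _ _ (Nat.cast_ne_zero.mpr m.succ_ne_zero)).symm
end

section
/- Let (Ω, P) be a probability space, N ≥ 1 an integer, and α : Ω → ℝ a random variable with α > 0 almost surely and α^k integrable for every k ≥ 1. Define real numbers b_l recursively by b_0 = 1 and, for l ≥ 1, b_l := −(1/(N·E[α]))·E[ α·∫_0^N ( Σ_{j=0}^{l−1} α^{l−j}·(t^{l−j}/(l−j)!)·b_j − α^l·Σ_{k=0}^{⌊t⌋−1} (t−k−1)^{l−1}/(l−1)! ) dt ]. Then for every l ≥ 1 the recursion b_l = (1/E[α])·( E[α^{l+1}]·Σ_{j=0}^{l} (N^{l−j}/(l+1−j)!)·(bernoulli j)/j! − Σ_{j=0}^{l−1} E[α^{l+1−j}]·(N^{l−j}/(l+1−j)!)·b_j ) holds. (These are the forward optimal average constants associated with the random path X_t = αt.) -/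
open scoped Nat
open MeasureTheory

theorem sawtooth_eq_of_mem_Ioo (p n : ℕ) {t : ℝ} (ht : t ∈ Set.Ioo (n : ℝ) ((n + 1 : ℕ) : ℝ)) :
    ∑ k ∈ Finset.range n, (t - (k : ℝ) - 1) ^ p / (p ! : ℝ) =
      ∑ k ∈ Finset.range ⌊t⌋.toNat, (t - (k : ℝ) - 1) ^ p / (p ! : ℝ) := by
  have h : ⌊t⌋ = (n : ℤ) := by
    rw [Int.floor_eq_iff]
    have h2 := ht.2
    push_cast at h2 ⊢
    exact ⟨ht.1.le, h2⟩
  rw [h, Int.toNat_natCast]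

theorem continuous_sum_pow_div_factorial (p n : ℕ) :
    Continuous fun t : ℝ => ∑ k ∈ Finset.range n, (t - (k : ℝ) - 1) ^ p / (p ! : ℝ) := by
  fun_prop

theorem intervalIntegrable_sawtooth_unit (p n : ℕ) :
    IntervalIntegrable
      (fun t : ℝ => ∑ k ∈ Finset.range ⌊t⌋.toNat, (t - (k : ℝ) - 1) ^ p / (p ! : ℝ))
      volume (n : ℝ) ((n + 1 : ℕ) : ℝ) := by
  refine ((continuous_sum_pow_div_factorial p n).intervalIntegrable _ _).congr_uIoo fun t ht => ?_
  rw [Set.uIoo_of_le (by simp)] at ht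
  exact sawtooth_eq_of_mem_Ioo p n ht

theorem intervalIntegrable_sawtooth (p N : ℕ) :
    IntervalIntegrable
      (fun t : ℝ => ∑ k ∈ Finset.range ⌊t⌋.toNat, (t - (k : ℝ) - 1) ^ p / (p ! : ℝ))
      volume 0 (N : ℝ) := by
  simpa using IntervalIntegrable.trans_iterate (a := fun n : ℕ => (n : ℝ)) (n := N)
    fun n _ => intervalIntegrable_sawtooth_unit p n

theorem integral_sawtooth_unit (p n : ℕ) :
    ∫ t in (n : ℝ)..((n + 1 : ℕ) : ℝ),
        ∑ k ∈ Finset.range ⌊t⌋.toNat, (t - (k : ℝ) - 1) ^ p / (p ! : ℝ) =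
      (n : ℝ) ^ (p + 1) / ((p + 1)! : ℝ) := by
  have hcongr : ∫ t in (n : ℝ)..((n + 1 : ℕ) : ℝ),
        ∑ k ∈ Finset.range ⌊t⌋.toNat, (t - (k : ℝ) - 1) ^ p / (p ! : ℝ) =
      ∫ t in (n : ℝ)..((n + 1 : ℕ) : ℝ),
        ∑ k ∈ Finset.range n, (t - (k : ℝ) - 1) ^ p / (p ! : ℝ) := by
    refine (intervalIntegral.integral_congr_uIoo fun t ht => ?_).symm
    rw [Set.uIoo_of_le (by simp)] at ht
    exact sawtooth_eq_of_mem_Ioo p n ht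
  have hterm (k : ℕ) : ∫ t in (n : ℝ)..((n + 1 : ℕ) : ℝ), (t - (k : ℝ) - 1) ^ p / (p ! : ℝ) =
      ((n : ℝ) - k) ^ (p + 1) / ((p + 1)! : ℝ)
        - ((n : ℝ) - (k + 1 : ℕ)) ^ (p + 1) / ((p + 1)! : ℝ) := by
    simp_rw [sub_sub]
    rw [intervalIntegral.integral_div,
      intervalIntegral.integral_comp_sub_right (fun t : ℝ => t ^ p), integral_pow,
      Nat.factorial_succ]
    have := Nat.factorial_ne_zero p
    push_cast
    field_simp
    ring
  rw [hcongr, intervalIntegral.integral_finsetSum]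
  · simp_rw [hterm]
    rw [Finset.sum_range_sub']
    simp
  · exact fun k _ => Continuous.intervalIntegrable (by fun_prop) _ _

theorem integral_sawtooth (p N : ℕ) :
    ∫ t in (0 : ℝ)..(N : ℝ),
        ∑ k ∈ Finset.range ⌊t⌋.toNat, (t - (k : ℝ) - 1) ^ p / (p ! : ℝ) =
      ∑ n ∈ Finset.range N, (n : ℝ) ^ (p + 1) / ((p + 1)! : ℝ) := by
  have h := intervalIntegral.sum_integral_adjacent_intervals (a := fun n : ℕ => (n : ℝ)) (n := N)
    fun n _ => intervalIntegrable_sawtooth_unit p n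
  simp_rw [integral_sawtooth_unit] at h
  simpa using h.symm

theorem sum_range_pow_div_factorial (N l : ℕ) :
    ∑ n ∈ Finset.range N, (n : ℝ) ^ l / (l ! : ℝ) =
      N * ∑ j ∈ Finset.range (l + 1),
        ((N : ℝ) ^ (l - j) / ((l + 1 - j)! : ℝ)) * (((bernoulli j : ℚ) : ℝ) / (j ! : ℝ)) := by
  have h := congrArg (Rat.cast : ℚ → ℝ) (sum_range_pow N l)
  push_cast at h
  rw [← Finset.sum_div, h, Finset.sum_div, Finset.mul_sum]
  refine Finset.sum_congr rfl fun j hj => ?_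
  have hjl : j ≤ l := Nat.lt_succ_iff.mp (Finset.mem_range.mp hj)
  rw [Nat.cast_choose ℝ (by lia : j ≤ l + 1), Nat.factorial_succ,
    show l + 1 - j = (l - j) + 1 by lia, pow_succ]
  have h1 := Nat.factorial_ne_zero l
  have h2 := Nat.factorial_ne_zero j
  have h3 := Nat.factorial_ne_zero (l - j + 1)
  push_cast
  field_simp

theorem integral_mul_sub_sawtooth (N l : ℕ) (hl : 1 ≤ l) (a : ℝ) (b : ℕ → ℝ) :
    a * ∫ t in (0:ℝ)..(N:ℝ),
          ((∑ j ∈ Finset.range l, a ^ (l - j) * (t ^ (l - j) / ((l - j)! : ℝ)) * b j)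
            - a ^ l * ∑ k ∈ Finset.range ⌊t⌋.toNat,
                (t - (k : ℝ) - 1) ^ (l - 1) / ((l - 1)! : ℝ)) =
      (∑ j ∈ Finset.range l,
          a ^ (l + 1 - j) * (N * ((N : ℝ) ^ (l - j) / ((l + 1 - j)! : ℝ)) * b j))
        - a ^ (l + 1) * (N * ∑ j ∈ Finset.range (l + 1),
            ((N : ℝ) ^ (l - j) / ((l + 1 - j)! : ℝ)) *
              (((bernoulli j : ℚ) : ℝ) / (j ! : ℝ))) := by
  rw [intervalIntegral.integral_sub (Continuous.intervalIntegrable (by fun_prop) _ _)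
      ((intervalIntegrable_sawtooth (l - 1) N).const_mul _),
    intervalIntegral.integral_const_mul, integral_sawtooth, Nat.sub_add_cancel hl,
    sum_range_pow_div_factorial, intervalIntegral.integral_finsetSum
      fun j _ => Continuous.intervalIntegrable (by fun_prop) _ _,
    mul_sub, ← mul_assoc, ← pow_succ', Finset.mul_sum]
  congr 1
  refine Finset.sum_congr rfl fun j hj => ?_
  have hjl : j < l := Finset.mem_range.mp hj
  rw [intervalIntegral.integral_mul_const, intervalIntegral.integral_const_mul,
    intervalIntegral.integral_div, integral_pow, show l + 1 - j = (l - j) + 1 by lia,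
    zero_pow (Nat.succ_ne_zero _), sub_zero, Nat.factorial_succ]
  have h1 := Nat.factorial_ne_zero (l - j)
  push_cast
  field_simp
  ring

/-- The forward optimal average constants associated with the random path `X_t = αt`
satisfy the stated recursion involving the moments of `α` and the Bernoulli numbers. -/
theorem random_forward_optimal_constants_recursion {Ω : Type*} [MeasurableSpace Ω]
    (μ : Measure Ω) [IsProbabilityMeasure μ] (N : ℕ) (hN : 1 ≤ N)
    (α : Ω → ℝ) (hpos : ∀ᵐ ω ∂μ, 0 < α ω)
    (hint : ∀ k : ℕ, 1 ≤ k → Integrable (fun ω => α ω ^ k) μ)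
    (b : ℕ → ℝ) (hb0 : b 0 = 1)
    (hdef : ∀ l, 1 ≤ l → b l =
      -(1 / ((N : ℝ) * ∫ ω, α ω ∂μ)) *
        ∫ ω, (α ω * ∫ t in (0:ℝ)..(N:ℝ),
          ((∑ j ∈ Finset.range l, α ω ^ (l - j) * (t ^ (l - j) / ((l - j)! : ℝ)) * b j)
            - α ω ^ l * ∑ k ∈ Finset.range ⌊t⌋.toNat,
                (t - (k : ℝ) - 1) ^ (l - 1) / ((l - 1)! : ℝ))) ∂μ) :
    ∀ l, 1 ≤ l → b l =
      (1 / ∫ ω, α ω ∂μ) *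
        ((∫ ω, α ω ^ (l + 1) ∂μ) *
            (∑ j ∈ Finset.range (l + 1),
              ((N : ℝ) ^ (l - j) / ((l + 1 - j)! : ℝ)) * (((bernoulli j : ℚ) : ℝ) / (j ! : ℝ)))
          - ∑ j ∈ Finset.range l,
              (∫ ω, α ω ^ (l + 1 - j) ∂μ) *
                ((N : ℝ) ^ (l - j) / ((l + 1 - j)! : ℝ)) * b j) := by
  intro l hl
  have hN' : (N : ℝ) ≠ 0 := by exact_mod_cast (by lia : N ≠ 0)
  rw [hdef l hl]
  simp_rw [integral_mul_sub_sawtooth N l hl]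
  rw [integral_sub
      (integrable_finsetSum _ fun j hj => (hint _ (by grind)).mul_const _)
      ((hint _ (by lia)).mul_const _),
    integral_finsetSum _ fun j hj => (hint _ (by grind)).mul_const _]
  simp_rw [integral_mul_const]
  have hsum : ∑ j ∈ Finset.range l, (∫ ω, α ω ^ (l + 1 - j) ∂μ) *
        (N * ((N : ℝ) ^ (l - j) / ((l + 1 - j)! : ℝ)) * b j) =
      N * ∑ j ∈ Finset.range l, (∫ ω, α ω ^ (l + 1 - j) ∂μ) *
        ((N : ℝ) ^ (l - j) / ((l + 1 - j)! : ℝ)) * b j := by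
    rw [Finset.mul_sum]
    exact Finset.sum_congr rfl fun j _ => by ring
  rw [hsum, one_div, mul_inv]
  field_simp
  ring
end
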